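/- Let d ≥ 2 and f(z) = ∏_{t=0}^∞ P(z^{-d^t}) with P ∈ ℤ[z], P(0) = 1, deg P < d, such that the Laurent series f(z) is badly approximable (all partial quotients of its continued fraction in ℚ((z^{-1})) have degree 1). Then for any integer b with |b| ≥ 2, either f(b) = 0 or there exists K > 0 such that the inequality |f(b) − p/q| < q^{-2} exp(−K√(log q · log log q)) has only finitely many rational solutions p/q. -/

import Mathlib

/-!
Write `c n` for the coefficients of `f(z) = ∑ c n * z⁻ⁿ`, which are products over base-`d` digits
and hence grow polynomially. Since all Hankel determinants of `c` are nonzero, every Padé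
approximant of `f` has exact degree and exact remainder order, and Siegel's lemma bounds the
coefficients of the `k`-th denominator by `k ^ O(k)`.

The functional equation `f(z) = Φ(z) f(z ^ d ^ T)` allows us to evaluate the Padé approximants at
`b ^ d ^ T` instead of `b`: with `β = |b| ^ d ^ T` this gives, for every `k` such that `β` exceeds
the loss `k ^ O(k)`, integers `Q, P` with `|Q|` close to `β ^ k` and `|Q f(b) - P|` close to
`β ^ (-k)`. Two consecutive approximants are not proportional, so one of them differs from a given
`p / q`, and this bounds `|q f(b) - p|` below by roughly `β ^ (-k)`, where `k` is chosen such that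
`β ^ k` is slightly larger than `q`. The total loss is a bounded power of `β`, and the condition
`k ^ O(k) ≤ β` with `k ≈ log q / log β` is met by `log β ≈ √(log q * log (log q))`.
-/

open Filter Finset

section DigitProducts

/-- The product of `u` over the base-`d` digits of `n`. When `u 0 = 1`, this is the coefficient of
`x ^ n` in the Mahler product `∏ₜ P(x ^ d ^ t)` with `P = ∑_{i < d} u i * x ^ i`. -/
def digitProd {M : Type*} [Monoid M] (d : ℕ) (u : ℕ → M) (n : ℕ) : M :=
  ((Nat.digits d n).map u).prod

/-- The value at `x` of the polynomial of degree less than `d` with coefficients `u`, that is, the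
factor `P` of the Mahler product. -/
def truncEval {R : Type*} [Semiring R] (d : ℕ) (u : ℕ → R) (x : R) : R :=
  ∑ i ∈ range d, u i * x ^ i

theorem digitProd_zero {M : Type*} [Monoid M] (d : ℕ) (u : ℕ → M) : digitProd d u 0 = 1 := by
  simp [digitProd]

theorem map_digitProd {M N F : Type*} [Monoid M] [Monoid N] [FunLike F M N] [MonoidHomClass F M N]
    (φ : F) (d : ℕ) (u : ℕ → M) (n : ℕ) : φ (digitProd d u n) = digitProd d (φ ∘ u) n := by
  simp [digitProd, map_list_prod, List.map_map]

theorem digitProd_add_mul {M : Type*} [Monoid M] {d : ℕ} (hd : 1 < d) {u : ℕ → M} (hu : u 0 = 1)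
    {r : ℕ} (hr : r < d) (m : ℕ) : digitProd d u (r + d * m) = u r * digitProd d u m := by
  by_cases h : r ≠ 0 ∨ m ≠ 0
  · simp [digitProd, Nat.digits_add d hd r m hr h]
  · push Not at h
    simp [h.1, h.2, hu, digitProd_zero]

theorem exists_norm_digitProd_le {R : Type*} [SeminormedRing R] [NormOneClass R] {d : ℕ}
    (hd : 1 < d) {u : ℕ → R} (hu : u 0 = 1) :
    ∃ γ : ℕ, ∀ n : ℕ, ‖digitProd d u n‖ ≤ ((n : ℝ) + 1) ^ γ := by
  obtain ⟨γ, hγ⟩ := pow_unbounded_of_one_lt (∑ r ∈ range d, ‖u r‖) one_lt_two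
  have hu_le : ∀ r < d, ‖u r‖ ≤ 2 ^ γ := fun r hr =>
    (single_le_sum (fun _ _ => norm_nonneg _) (mem_range.2 hr)).trans hγ.le
  refine ⟨γ, fun n => ?_⟩
  induction n using Nat.strong_induction_on with
  | _ n ih =>
    rcases n.eq_zero_or_pos with rfl | hn
    · simp [digitProd_zero]
    obtain ⟨r, m, hr, hm, rfl⟩ : ∃ r m, r < d ∧ m < n ∧ r + d * m = n :=
      ⟨n % d, n / d, Nat.mod_lt _ (by lia), Nat.div_lt_self hn hd, Nat.mod_add_div n d⟩
    rw [digitProd_add_mul hd hu hr]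
    rcases r.eq_zero_or_pos with rfl | hr0
    · rw [hu, one_mul]
      refine (ih m hm).trans ?_
      gcongr
    · have hbase : (2 : ℝ) * (m + 1) ≤ ((r + d * m : ℕ) : ℝ) + 1 := by
        have : 2 * (m + 1) ≤ r + d * m + 1 := by nlinarith
        exact_mod_cast this
      calc ‖u r * digitProd d u m‖ ≤ 2 ^ γ * ((m : ℝ) + 1) ^ γ :=
            norm_mul_le_of_le (hu_le r hr) (ih m hm)
        _ = (2 * ((m : ℝ) + 1)) ^ γ := (mul_pow ..).symm
        _ ≤ (((r + d * m : ℕ) : ℝ) + 1) ^ γ := by gcongr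

theorem sum_range_mul_eq_sum_sum {M : Type*} [AddCommMonoid M] (d a : ℕ) (f : ℕ → M) :
    ∑ n ∈ range (d * a), f n = ∑ m ∈ range a, ∑ r ∈ range d, f (r + d * m) := by
  induction a with
  | zero => simp
  | succ a ih =>
    rw [Nat.mul_succ, sum_range_add, ih, sum_range_succ]
    simp only [add_comm]

theorem prod_truncEval_eq_sum_digitProd {R : Type*} [CommSemiring R] {d : ℕ} (hd : 1 < d)
    {u : ℕ → R} (hu : u 0 = 1) (T : ℕ) (x : R) :
    ∏ t ∈ range T, truncEval d u (x ^ d ^ t) = ∑ n ∈ range (d ^ T), digitProd d u n * x ^ n := by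
  induction T generalizing x with
  | zero => simp [digitProd_zero]
  | succ T ih =>
    have hpow : ∀ t, x ^ d ^ (t + 1) = (x ^ d) ^ d ^ t := fun t => by rw [← pow_mul, pow_succ']
    rw [prod_range_succ', pow_succ', sum_range_mul_eq_sum_sum]
    simp only [hpow, ih, sum_mul, pow_zero, pow_one]
    refine sum_congr rfl fun m _ => ?_
    rw [truncEval, mul_sum]
    refine sum_congr rfl fun r hr => ?_
    rw [digitProd_add_mul hd hu (mem_range.1 hr)]
    ring

end DigitProducts

section PowerSeries

/-- The sum bounding, on the disc of radius `1 / 2`, the power series whose `n`-th coefficient has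
norm at most `(n + 1) ^ γ`. -/
noncomputable def geomMoment (γ : ℕ) : ℝ := ∑' n : ℕ, ((n : ℝ) + 1) ^ γ * (1 / 2) ^ n

theorem summable_add_one_pow_mul_geometric (γ : ℕ) {ρ : ℝ} (hρ₀ : 0 ≤ ρ) (hρ : ρ < 1) :
    Summable fun n : ℕ => ((n : ℝ) + 1) ^ γ * ρ ^ n := by
  rcases hρ₀.eq_or_lt with rfl | hρ₀
  · exact summable_of_ne_finset_zero (s := {0}) fun n hn => by simp_all
  have h := (summable_nat_add_iff 1).2
    (summable_pow_mul_geometric_of_norm_lt_one γ (r := ρ) (by rwa [Real.norm_of_nonneg hρ₀.le]))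
  refine (h.mul_left ρ⁻¹).congr fun n => ?_
  rw [Nat.cast_succ, pow_succ']
  field_simp

theorem hasSum_geomMoment (γ : ℕ) :
    HasSum (fun n : ℕ => ((n : ℝ) + 1) ^ γ * (1 / 2) ^ n) (geomMoment γ) :=
  (summable_add_one_pow_mul_geometric γ (by norm_num) (by norm_num)).hasSum

theorem one_le_geomMoment (γ : ℕ) : 1 ≤ geomMoment γ := by
  simpa using le_hasSum (hasSum_geomMoment γ) 0 fun _ _ => by positivity

variable {R : Type*} [NormedRing R] [NormOneClass R] {γ : ℕ} {a : ℕ → R} {D : ℝ} {x : R}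

theorem norm_mul_pow_le (ha : ∀ n, ‖a n‖ ≤ D * ((n : ℝ) + 1) ^ γ) (n : ℕ) :
    ‖a n * x ^ n‖ ≤ D * (((n : ℝ) + 1) ^ γ * ‖x‖ ^ n) := by
  rw [← mul_assoc]
  exact norm_mul_le_of_le (ha n) (norm_pow_le x n)

theorem summable_mul_pow_of_norm_le [CompleteSpace R]
    (ha : ∀ n, ‖a n‖ ≤ D * ((n : ℝ) + 1) ^ γ) (hx : ‖x‖ < 1) : Summable fun n => a n * x ^ n :=
  .of_norm_bounded ((summable_add_one_pow_mul_geometric γ (norm_nonneg x) hx).mul_left D)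
    (norm_mul_pow_le ha)

theorem norm_mul_pow_le_of_norm_le_half (ha : ∀ n, ‖a n‖ ≤ D * ((n : ℝ) + 1) ^ γ)
    (hx : ‖x‖ ≤ 1 / 2) (n : ℕ) : ‖a n * x ^ n‖ ≤ D * (((n : ℝ) + 1) ^ γ * (1 / 2) ^ n) := by
  refine (norm_mul_pow_le ha n).trans ?_
  have hD : 0 ≤ D := by simpa using (norm_nonneg _).trans (ha 0)
  gcongr

theorem norm_tsum_mul_pow_le (ha : ∀ n, ‖a n‖ ≤ D * ((n : ℝ) + 1) ^ γ) (hx : ‖x‖ ≤ 1 / 2) :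
    ‖∑' n, a n * x ^ n‖ ≤ D * geomMoment γ :=
  tsum_of_norm_bounded ((hasSum_geomMoment γ).mul_left D) (norm_mul_pow_le_of_norm_le_half ha hx)

theorem norm_sum_mul_pow_le (ha : ∀ n, ‖a n‖ ≤ D * ((n : ℝ) + 1) ^ γ) (hx : ‖x‖ ≤ 1 / 2)
    (s : Finset ℕ) : ‖∑ n ∈ s, a n * x ^ n‖ ≤ D * geomMoment γ := by
  have hD : 0 ≤ D := by simpa using (norm_nonneg _).trans (ha 0)
  exact (norm_sum_le_of_le s fun n _ => norm_mul_pow_le_of_norm_le_half ha hx n).trans <|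
    sum_le_hasSum s (fun _ _ => by positivity) ((hasSum_geomMoment γ).mul_left D)

theorem norm_tsum_mul_pow_sub_le [CompleteSpace R] (hx : ‖x‖ ≤ 1 / 2)
    (ha : ∀ n, ‖a (n + 1)‖ ≤ D * ((n : ℝ) + 1) ^ γ) :
    ‖∑' n, a n * x ^ n - a 0‖ ≤ D * geomMoment γ * ‖x‖ := by
  have hs := summable_mul_pow_of_norm_le ha (hx.trans_lt (by norm_num))
  have hshift : HasSum (fun n => a (n + 1) * x ^ (n + 1)) ((∑' n, a (n + 1) * x ^ n) * x) :=
    (hs.hasSum.mul_right x).congr_fun fun n => by rw [mul_assoc, ← pow_succ]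
  rw [(HasSum.zero_add (f := fun n => a n * x ^ n) hshift).tsum_eq, pow_zero, mul_one,
    add_sub_cancel_left]
  exact norm_mul_le_of_le (norm_tsum_mul_pow_le ha hx) le_rfl

end PowerSeries

section MahlerProduct

/-- The Mahler product `∏ₜ P(x ^ d ^ t)`, where `P` has coefficients `u` in degrees less than `d`;
its variable is `x = z⁻¹` in terms of the Laurent series `f(z)`. -/
noncomputable def mahlerProd {R : Type*} [CommSemiring R] [TopologicalSpace R] (d : ℕ)
    (u : ℕ → R) (x : R) : R :=
  ∏' t : ℕ, truncEval d u (x ^ d ^ t)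

variable {R : Type*} [NormedCommRing R] [NormOneClass R] [CompleteSpace R] {d : ℕ} {u : ℕ → R}
  {x : R}

theorem multipliable_truncEval_pow (hd : 1 < d) (hu : u 0 = 1) (hx : ‖x‖ < 1) :
    Multipliable fun t : ℕ => truncEval d u (x ^ d ^ t) := by
  obtain ⟨e, rfl⟩ := Nat.exists_eq_succ_of_ne_zero (Nat.ne_zero_of_lt hd)
  have hsplit : ∀ t : ℕ, truncEval (e + 1) u (x ^ (e + 1) ^ t) =
      1 + ∑ i ∈ range e, u (i + 1) * (x ^ (e + 1) ^ t) ^ (i + 1) := fun t => by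
    simp [truncEval, sum_range_succ', hu, add_comm]
  simp_rw [hsplit]
  have hpow_le : ∀ t i : ℕ, ‖(x ^ (e + 1) ^ t) ^ (i + 1)‖ ≤ ‖x‖ ^ t := fun t i => by
    have ht : t ≤ (e + 1) ^ t * (i + 1) :=
      (Nat.lt_pow_self hd).le.trans (Nat.le_mul_of_pos_right _ i.succ_pos)
    rw [← pow_mul]
    exact (norm_pow_le x _).trans (pow_le_pow_of_le_one (norm_nonneg x) hx.le ht)
  have hgeom := (summable_geometric_of_lt_one (norm_nonneg x) hx).mul_left
    (∑ i ∈ range e, ‖u (i + 1)‖)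
  refine multipliable_one_add_of_summable <|
    .of_nonneg_of_le (fun _ => norm_nonneg _) (fun t => ?_) hgeom
  rw [sum_mul]
  exact norm_sum_le_of_le _ fun i _ => norm_mul_le_of_le le_rfl (hpow_le t i)

theorem mahlerProd_eq_prod_mul (hd : 1 < d) (hu : u 0 = 1) (hx : ‖x‖ < 1) (T : ℕ) :
    mahlerProd d u x =
      (∏ t ∈ range T, truncEval d u (x ^ d ^ t)) * mahlerProd d u (x ^ d ^ T) := by
  have hxT : ‖x ^ d ^ T‖ < 1 :=
    (norm_pow_le x _).trans_lt (pow_lt_one₀ (norm_nonneg x) hx (by positivity))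
  have hshift : ∀ t, truncEval d u ((x ^ d ^ T) ^ d ^ t) = truncEval d u (x ^ d ^ (t + T)) :=
    fun t => by rw [← pow_mul, ← pow_add, add_comm t]
  have hmul := multipliable_truncEval_pow hd hu hxT
  simp only [mahlerProd, hshift] at hmul ⊢
  exact (Multipliable.prod_mul_tprod_nat_mul' (f := fun t => truncEval d u (x ^ d ^ t)) hmul).symm

theorem mahlerProd_eq_tsum (hd : 1 < d) (hu : u 0 = 1) (hx : ‖x‖ < 1) :
    mahlerProd d u x = ∑' n, digitProd d u n * x ^ n := by
  obtain ⟨γ, hγ⟩ := exists_norm_digitProd_le hd hu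
  have hs : Summable fun n => digitProd d u n * x ^ n :=
    summable_mul_pow_of_norm_le (D := 1) (by simpa using hγ) hx
  refine tendsto_nhds_unique (multipliable_truncEval_pow hd hu hx).hasProd.tendsto_prod_nat ?_
  simp_rw [prod_truncEval_eq_sum_digitProd hd hu]
  exact hs.hasSum.tendsto_sum_nat.comp (tendsto_pow_atTop_atTop_of_one_lt hd)

end MahlerProduct

section Pade

/-- The `n`-th entry of the infinite Hankel matrix of `c` applied to `(v 0, …, v (m - 1))`. For
`Q(z) = ∑ v j * z ^ j` it is the coefficient of `z⁻ⁿ` in `Q(z) * ∑ c i * z⁻ⁱ`. -/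
def hankelSum (c : ℕ → ℤ) (m : ℕ) (v : ℕ → ℤ) (n : ℕ) : ℤ := ∑ j ∈ range m, v j * c (n + j)

/-- All Hankel determinants of `c` are nonzero, which encodes that `∑ c n * z⁻ⁿ⁻¹` is badly
approximable. -/
def HankelRegular (c : ℕ → ℤ) : Prop :=
  ∀ n : ℕ, (Matrix.of fun i j : Fin n => c (i + j)).det ≠ 0

/-- `∑ v j * z ^ j` is the denominator of the `k`-th Padé approximant of `∑ c n * z⁻ⁿ`, has degree
exactly `k`, and the remainder has order exactly `k`. -/
structure IsPadeDenominator (c : ℕ → ℤ) (k : ℕ) (v : ℕ → ℤ) : Prop where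
  hankelSum_eq_zero : ∀ n < k, hankelSum c (k + 1) v n = 0
  leadingCoeff_ne_zero : v k ≠ 0
  hankelSum_ne_zero : hankelSum c (k + 1) v k ≠ 0

variable {c v : ℕ → ℤ} {k : ℕ}

theorem mulVec_eq_hankelSum {l m : ℕ} (i : Fin l) :
    ((Matrix.of fun (i : Fin l) (j : Fin m) => c (i + j)).mulVec fun j => v j) i =
      hankelSum c m v i := by
  rw [hankelSum, ← Fin.sum_univ_eq_sum_range (fun j => v j * c (i + j))]
  simp only [Matrix.mulVec, dotProduct, Matrix.of_apply, mul_comm]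

theorem HankelRegular.eq_zero_of_hankelSum_eq_zero (hc : HankelRegular c) {m : ℕ}
    (hv : ∀ n < m, hankelSum c m v n = 0) : ∀ j < m, v j = 0 := by
  intro j hj
  have h := Matrix.eq_zero_of_mulVec_eq_zero (v := fun j : Fin m => v j) (hc m) <| by
    ext i
    rw [mulVec_eq_hankelSum, hv i i.2, Pi.zero_apply]
  exact congrFun h ⟨j, hj⟩

theorem HankelRegular.isPadeDenominator (hc : HankelRegular c)
    (hv : ∀ n < k, hankelSum c (k + 1) v n = 0) (hv₀ : ∃ j ≤ k, v j ≠ 0) :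
    IsPadeDenominator c k v := by
  obtain ⟨j, hj, hvj⟩ := hv₀
  refine ⟨hv, fun hlead => ?_, fun hrem => ?_⟩
  · refine hvj (hc.eq_zero_of_hankelSum_eq_zero (m := k) (fun n hn => ?_) j ?_)
    · rw [← hv n hn, hankelSum, hankelSum, sum_range_succ, hlead, zero_mul, add_zero]
    · exact hj.lt_of_ne (by rintro rfl; exact hvj hlead)
  · refine hvj (hc.eq_zero_of_hankelSum_eq_zero (m := k + 1) (fun n hn => ?_) j (by lia))
    rcases Nat.lt_succ_iff_lt_or_eq.1 hn with hn | rfl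
    exacts [hv n hn, hrem]

/-- Siegel's lemma for the Hankel system of `k` equations in `k + 1` unknowns. -/
theorem exists_norm_le_and_hankelSum_eq_zero (hk : 0 < k) {C : ℝ} (hC : 1 ≤ C)
    (hc : ∀ n < 2 * k, ‖c n‖ ≤ C) :
    ∃ v : ℕ → ℤ, (∃ j ≤ k, v j ≠ 0) ∧ (∀ j ≤ k, ‖v j‖ ≤ ((k + 1) * C) ^ k) ∧
      ∀ n < k, hankelSum c (k + 1) v n = 0 := by
  let := Matrix.seminormedAddCommGroup (m := Fin k) (n := Fin (k + 1)) (α := ℤ)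
  let A : Matrix (Fin k) (Fin (k + 1)) ℤ := .of fun i j => c (i + j)
  have hA : max 1 ‖A‖ ≤ C :=
    max_le hC ((Matrix.norm_le_iff (by linarith)).2 fun i j => hc _ (by lia))
  obtain ⟨t, ht₀, hAt, ht⟩ := Int.Matrix.exists_ne_zero_int_vec_norm_le A (by simp) (by simpa)
  let v : ℕ → ℤ := fun j => if h : j < k + 1 then t ⟨j, h⟩ else 0
  have hvt : (fun j : Fin (k + 1) => v j) = t := by
    ext j
    simp only [v, j.2, dite_true]
  refine ⟨v, ?_, fun j hj => ?_, fun n hn => ?_⟩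
  · obtain ⟨j, hj⟩ := Function.ne_iff.1 (hvt ▸ ht₀)
    exact ⟨j, j.is_le, hj⟩
  · calc ‖v j‖ ≤ ‖t‖ := hvt ▸ norm_le_pi_norm (fun j : Fin (k + 1) => v j) ⟨j, by lia⟩
      _ ≤ ((k + 1) * max 1 ‖A‖) ^ k := by simpa using ht
      _ ≤ ((k + 1) * C) ^ k := by gcongr
  · rw [← mulVec_eq_hankelSum (m := k + 1) (⟨n, hn⟩ : Fin k), hvt]
    exact congrFun hAt ⟨n, hn⟩

variable {γ : ℕ} {V : ℝ}

theorem HankelRegular.exists_isPadeDenominator (hc : HankelRegular c)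
    (hcγ : ∀ n : ℕ, ‖c n‖ ≤ ((n : ℝ) + 1) ^ γ) (hk : 0 < k) :
    ∃ v, IsPadeDenominator c k v ∧ ∀ j ≤ k, ‖v j‖ ≤ (2 * (k : ℝ) + 2) ^ ((γ + 1) * k) := by
  have hbase : (1 : ℝ) ≤ 2 * k + 2 := by linarith [k.cast_nonneg (α := ℝ)]
  obtain ⟨v, hv₀, hv_le, hv⟩ := exists_norm_le_and_hankelSum_eq_zero hk
    (one_le_pow₀ hbase : 1 ≤ (2 * (k : ℝ) + 2) ^ γ) fun n hn => by
      have hn' : (n : ℝ) + 1 ≤ 2 * k + 2 := by norm_cast; lia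
      exact (hcγ n).trans (by gcongr)
  refine ⟨v, hc.isPadeDenominator hv hv₀, fun j hj => (hv_le j hj).trans ?_⟩
  rw [pow_mul, pow_succ']
  gcongr
  · linarith [k.cast_nonneg (α := ℝ)]
  · norm_num

theorem norm_hankelSum_le (hcγ : ∀ n : ℕ, ‖c n‖ ≤ ((n : ℝ) + 1) ^ γ) (hv : ∀ j ≤ k, ‖v j‖ ≤ V)
    (n : ℕ) : ‖hankelSum c (k + 1) v n‖ ≤ (k + 1) * V * ((n : ℝ) + k + 1) ^ γ := by
  have hterm : ∀ j ∈ range (k + 1), ‖v j * c (n + j)‖ ≤ V * ((n : ℝ) + k + 1) ^ γ := fun j hj => by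
    have hj' : j ≤ k := mem_range_succ_iff.1 hj
    refine norm_mul_le_of_le (hv j hj') ((hcγ _).trans ?_)
    push_cast
    gcongr
  refine (norm_sum_le_of_le _ hterm).trans_eq ?_
  simp [mul_assoc]

variable {B : ℤ}

theorem exists_int_pow_mul_sum_inv_pow (hB : B ≠ 0) (c : ℕ → ℤ) (j : ℕ) :
    ∃ P : ℤ, (B : ℝ) ^ j * ∑ n ∈ range j, (c n : ℝ) * (B : ℝ)⁻¹ ^ n = B * P := by
  refine ⟨∑ n ∈ range j, c n * B ^ (j - 1 - n), ?_⟩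
  push_cast
  rw [mul_sum, mul_sum]
  refine sum_congr rfl fun n hn => ?_
  have hpow : (B : ℝ) ^ j = B * B ^ (j - 1 - n) * B ^ n := by
    rw [← pow_succ', ← pow_add]
    congr 1
    have := mem_range.1 hn
    lia
  have : (B : ℝ) ≠ 0 := mod_cast hB
  rw [hpow, inv_pow]
  field_simp

theorem exists_int_pow_mul_tsum_inv_pow (hB : B ≠ 0)
    (hs : Summable fun n => (c n : ℝ) * (B : ℝ)⁻¹ ^ n) (j : ℕ) :
    ∃ P : ℤ, (B : ℝ) ^ j * ∑' n, (c n : ℝ) * (B : ℝ)⁻¹ ^ n =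
      B * P + ∑' n, (c (n + j) : ℝ) * (B : ℝ)⁻¹ ^ n := by
  obtain ⟨P, hP⟩ := exists_int_pow_mul_sum_inv_pow hB c j
  have : (B : ℝ) ≠ 0 := mod_cast hB
  refine ⟨P, ?_⟩
  rw [← hs.sum_add_tsum_nat_add j, mul_add, hP, ← tsum_mul_left]
  congr 1
  refine tsum_congr fun n => ?_
  rw [pow_add, inv_pow, inv_pow]
  field_simp

theorem exists_int_sum_mul_tsum_sub (hB : B ≠ 0)
    (hs : Summable fun n => (c n : ℝ) * (B : ℝ)⁻¹ ^ n) (m : ℕ) (v : ℕ → ℤ) :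
    ∃ P : ℤ, (∑ j ∈ range m, (v j : ℝ) * (B : ℝ) ^ j) * ∑' n, (c n : ℝ) * (B : ℝ)⁻¹ ^ n - B * P =
      ∑' n, (hankelSum c m v n : ℝ) * (B : ℝ)⁻¹ ^ n := by
  have hshift : ∀ j, Summable fun n => (c (n + j) : ℝ) * (B : ℝ)⁻¹ ^ n := fun j =>
    (((summable_nat_add_iff j).2 hs).mul_left ((B : ℝ) ^ j)).congr fun n => by
      have : (B : ℝ) ≠ 0 := mod_cast hB
      rw [pow_add, inv_pow, inv_pow]
      field_simp
  choose P hP using exists_int_pow_mul_tsum_inv_pow hB hs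
  have htail : ∑' n, (hankelSum c m v n : ℝ) * (B : ℝ)⁻¹ ^ n =
      ∑ j ∈ range m, (v j : ℝ) * ∑' n, (c (n + j) : ℝ) * (B : ℝ)⁻¹ ^ n := by
    simp_rw [← tsum_mul_left]
    rw [← Summable.tsum_finsetSum fun j _ => (hshift j).mul_left (v j : ℝ)]
    simp only [hankelSum, Int.cast_sum, Int.cast_mul, sum_mul, mul_assoc]
  refine ⟨∑ j ∈ range m, v j * P j, ?_⟩
  rw [htail, Int.cast_sum, sum_mul, mul_sum, ← sum_sub_distrib]
  refine sum_congr rfl fun j _ => ?_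
  rw [Int.cast_mul]
  linear_combination (v j : ℝ) * hP j

theorem tsum_mul_pow_eq_pow_mul_tsum {a : ℕ → ℝ} (ha : ∀ n < k, a n = 0) (x : ℝ) :
    ∑' n, a n * x ^ n = x ^ k * ∑' n, a (n + k) * x ^ n := by
  have hsupp : Function.support (fun n => a n * x ^ n) ⊆ Set.range (· + k) := fun n hn => by
    refine ⟨n - k, Nat.sub_add_cancel (not_lt.1 fun hnk => hn ?_)⟩
    simp only [ha n hnk, zero_mul]
  rw [← (add_left_injective k).tsum_eq hsupp, ← tsum_mul_left]
  exact tsum_congr fun n => by ring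

end Pade

section GoodApprox

variable {K : Type*} [Field K] [LinearOrder K] [IsStrictOrderedRing K] {v : ℕ → K} {V B : K} {k : ℕ}

theorem abs_sub_one_mul_abs_sum_range_mul_pow_le (hB : 1 ≤ |B|) {n : ℕ}
    (hv : ∀ j < n, |v j| ≤ V) (hV : 0 ≤ V) :
    (|B| - 1) * |∑ j ∈ range n, v j * B ^ j| ≤ V * |B| ^ n := by
  have hsum : |∑ j ∈ range n, v j * B ^ j| ≤ V * ∑ j ∈ range n, |B| ^ j := by
    refine (abs_sum_le_sum_abs _ _).trans ?_
    rw [mul_sum]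
    gcongr with j hj
    rw [abs_mul, abs_pow]
    gcongr
    exact hv j (mem_range.1 hj)
  calc (|B| - 1) * |∑ j ∈ range n, v j * B ^ j| ≤ (|B| - 1) * (V * ∑ j ∈ range n, |B| ^ j) :=
        mul_le_mul_of_nonneg_left hsum (sub_nonneg.2 hB)
    _ = V * (|B| ^ n - 1) := by rw [← geom_sum_mul]; ring
    _ ≤ V * |B| ^ n := by gcongr; linarith

theorem abs_sum_range_succ_mul_pow_le (hB : 2 ≤ |B|) (hv : ∀ j ≤ k, |v j| ≤ V) :
    |∑ j ∈ range (k + 1), v j * B ^ j| ≤ 2 * V * |B| ^ k := by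
  have hV : 0 ≤ V := (abs_nonneg _).trans (hv k le_rfl)
  have h := abs_sub_one_mul_abs_sum_range_mul_pow_le (by linarith)
    (fun j hj => hv j (Nat.lt_succ_iff.1 hj)) hV
  refine le_of_mul_le_mul_left (h.trans ?_) (by linarith : 0 < |B| - 1)
  have : 0 ≤ V * |B| ^ k := by positivity
  rw [pow_succ]
  nlinarith

theorem le_abs_sum_range_succ_mul_pow (hV : 1 ≤ V) (hVB : 4 * V ≤ |B|) (hv : ∀ j < k, |v j| ≤ V)
    (hvk : 1 ≤ |v k|) : |B| ^ k / 2 ≤ |∑ j ∈ range (k + 1), v j * B ^ j| := by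
  have h := abs_sub_one_mul_abs_sum_range_mul_pow_le (B := B) (by linarith) hv (by linarith)
  have htail : |∑ j ∈ range k, v j * B ^ j| ≤ |B| ^ k / 2 := by
    refine le_of_mul_le_mul_left (h.trans ?_) (by linarith : 0 < |B| - 1)
    have : 0 ≤ |B| ^ k := by positivity
    nlinarith
  have hlead : |B| ^ k ≤ |v k * B ^ k| := by
    rw [abs_mul, abs_pow]
    exact le_mul_of_one_le_left (by positivity) hvk
  have := abs_sub_abs_le_abs_add (v k * B ^ k) (∑ j ∈ range k, v j * B ^ j)
  rw [sum_range_succ, add_comm]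
  linarith

/-- The loss factor of the `k`-th Padé approximant: it bounds the coefficients of the denominator
as well as the normalised remainder, when the coefficients of the series are `O(n ^ γ)`. -/
noncomputable def padeBound (γ k : ℕ) : ℝ :=
  geomMoment γ * (2 * (k : ℝ) + 2) ^ ((γ + 1) * (k + 1))

/-- `P / Q` approximates `f` with `|Q|` of size `X` and `|Q * f - P|` of size `δ / X`, in each case
within a factor `1 / 2` from below and, up to a constant, `W` from above. The lower bounds are what
makes approximations at different scales independent. -/
structure IsGoodApprox (f δ W X : ℝ) (Q P : ℤ) : Prop where
  le_abs_den : X / 2 ≤ |(Q : ℝ)|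
  abs_den_le : |(Q : ℝ)| ≤ 2 * W * X
  le_abs_sub : δ / 2 ≤ X * |Q * f - P|
  abs_sub_le : X * |Q * f - P| ≤ δ * W

theorem padeBound_mono (γ : ℕ) : Monotone (padeBound γ) := fun k l hkl => by
  have hbase : (1 : ℝ) ≤ 2 * k + 2 := by linarith [k.cast_nonneg (α := ℝ)]
  have := one_le_geomMoment γ
  calc padeBound γ k ≤ geomMoment γ * (2 * (k : ℝ) + 2) ^ ((γ + 1) * (l + 1)) := by
        unfold padeBound
        gcongr
    _ ≤ padeBound γ l := by
        unfold padeBound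
        gcongr

theorem pow_le_padeBound {γ k m : ℕ} (hm : m ≤ (γ + 1) * (k + 1)) :
    (2 * (k : ℝ) + 2) ^ m ≤ padeBound γ k := by
  have hbase : (1 : ℝ) ≤ 2 * k + 2 := by linarith [k.cast_nonneg (α := ℝ)]
  exact (pow_le_pow_right₀ hbase hm).trans
    (le_mul_of_one_le_left (by positivity) (one_le_geomMoment γ))

theorem one_le_padeBound (γ k : ℕ) : 1 ≤ padeBound γ k := by
  simpa using pow_le_padeBound (Nat.zero_le ((γ + 1) * (k + 1)))

theorem norm_hankelSum_add_le {c v : ℕ → ℤ} {γ i : ℕ} (hcγ : ∀ n : ℕ, ‖c n‖ ≤ ((n : ℝ) + 1) ^ γ)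
    (hv : ∀ j ≤ k, ‖v j‖ ≤ (2 * (k : ℝ) + 2) ^ ((γ + 1) * k)) (hi : i ≤ 1) (n : ℕ) :
    ‖hankelSum c (k + 1) v (n + (k + i))‖ ≤
      (2 * (k : ℝ) + 2) ^ ((γ + 1) * (k + 1)) * ((n : ℝ) + 1) ^ γ := by
  have hshift : (((n + (k + i) : ℕ) : ℝ) + k + 1) ≤ (2 * k + 2) * (n + 1) := by
    norm_cast
    nlinarith
  calc _ ≤ ((k : ℝ) + 1) * (2 * k + 2) ^ ((γ + 1) * k) *
        (((n + (k + i) : ℕ) : ℝ) + k + 1) ^ γ := norm_hankelSum_le hcγ hv _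
    _ ≤ (2 * (k : ℝ) + 2) * (2 * k + 2) ^ ((γ + 1) * k) * ((2 * k + 2) * (n + 1)) ^ γ := by
      gcongr
      · linarith [k.cast_nonneg (α := ℝ)]
      · norm_num
    _ = _ := by
      rw [mul_pow]
      ring

theorem IsPadeDenominator.tsum_hankelSum_estimates {c v : ℕ → ℤ} (h : IsPadeDenominator c k v)
    {γ : ℕ} (hcγ : ∀ n : ℕ, ‖c n‖ ≤ ((n : ℝ) + 1) ^ γ)
    (hv : ∀ j ≤ k, ‖v j‖ ≤ (2 * (k : ℝ) + 2) ^ ((γ + 1) * k)) {x : ℝ} (hx : |x| ≤ 1 / 2) :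
    1 - padeBound γ k * |x| ≤ |∑' n, (hankelSum c (k + 1) v (n + k) : ℝ) * x ^ n| ∧
      |∑' n, (hankelSum c (k + 1) v (n + k) : ℝ) * x ^ n| ≤ padeBound γ k := by
  have hbound := fun i hi n => norm_hankelSum_add_le hcγ hv (i := i) hi n
  have hlead : (1 : ℝ) ≤ |(hankelSum c (k + 1) v k : ℝ)| :=
    mod_cast Int.one_le_abs h.hankelSum_ne_zero
  have hsub := norm_tsum_mul_pow_sub_le (a := fun n => (hankelSum c (k + 1) v (n + k) : ℝ)) hx
    fun n => by
      rw [Int.norm_cast_real, add_assoc, add_comm 1]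
      exact hbound 1 le_rfl n
  have hle := norm_tsum_mul_pow_le (a := fun n => (hankelSum c (k + 1) v (n + k) : ℝ))
    (fun n => (Int.norm_cast_real _).trans_le (hbound 0 zero_le_one n)) hx
  rw [mul_comm _ (geomMoment γ)] at hsub hle
  simp only [zero_add, Real.norm_eq_abs] at hsub hle
  refine ⟨?_, hle⟩
  have := abs_sub_abs_le_abs_sub (hankelSum c (k + 1) v k : ℝ)
    (∑' n, (hankelSum c (k + 1) v (n + k) : ℝ) * x ^ n)
  rw [abs_sub_comm] at hsub
  unfold padeBound
  linarith

theorem HankelRegular.exists_isGoodApprox {c : ℕ → ℤ} (hc : HankelRegular c) {γ : ℕ}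
    (hcγ : ∀ n : ℕ, ‖c n‖ ≤ ((n : ℝ) + 1) ^ γ) (hk : 0 < k) {B : ℤ} {W : ℝ}
    (hW : padeBound γ k ≤ W) (hWB : 4 * W ≤ |(B : ℝ)|) :
    ∃ Q P : ℤ, IsGoodApprox (∑' n, (c n : ℝ) * (B : ℝ)⁻¹ ^ n) 1 W (|(B : ℝ)| ^ k) Q (B * P) := by
  obtain ⟨v, hpade, hv⟩ := hc.exists_isPadeDenominator hcγ hk
  have hW1 : 1 ≤ W := (one_le_padeBound γ k).trans hW
  have hvW : ∀ j ≤ k, |(v j : ℝ)| ≤ W := fun j hj =>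
    ((hv j hj).trans (pow_le_padeBound (by lia))).trans hW
  have hBpos : 0 < |(B : ℝ)| := by linarith
  have hB : (B : ℝ) ≠ 0 := abs_pos.1 hBpos
  have hx : |(B : ℝ)⁻¹| ≤ 1 / 2 := by
    rw [abs_inv, one_div]
    exact inv_anti₀ two_pos (by linarith)
  have hxW : padeBound γ k * |(B : ℝ)⁻¹| ≤ 1 / 4 := by
    rw [abs_inv, ← div_eq_mul_inv, div_le_iff₀ hBpos]
    linarith
  obtain ⟨hrem_ge, hrem_le⟩ := hpade.tsum_hankelSum_estimates hcγ hv hx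
  have hs : Summable fun n => (c n : ℝ) * (B : ℝ)⁻¹ ^ n :=
    summable_mul_pow_of_norm_le (D := 1) (γ := γ)
      (fun n => by rw [Int.norm_cast_real, one_mul]; exact hcγ n) (hx.trans_lt (by norm_num))
  obtain ⟨P, hP⟩ := exists_int_sum_mul_tsum_sub (mod_cast hB) hs (k + 1) v
  have hrem : |(B : ℝ)| ^ k * |(∑ j ∈ range (k + 1), (v j : ℝ) * (B : ℝ) ^ j) *
      ∑' n, (c n : ℝ) * (B : ℝ)⁻¹ ^ n - B * P| =
      |∑' n, (hankelSum c (k + 1) v (n + k) : ℝ) * (B : ℝ)⁻¹ ^ n| := by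
    rw [hP, tsum_mul_pow_eq_pow_mul_tsum (k := k), abs_mul, abs_pow, abs_inv, ← mul_assoc,
      ← mul_pow, mul_inv_cancel₀ hBpos.ne', one_pow, one_mul]
    intro n hn
    rw [hpade.hankelSum_eq_zero n hn, Int.cast_zero]
  refine ⟨∑ j ∈ range (k + 1), v j * B ^ j, P, ?_, ?_, ?_, ?_⟩ <;> push_cast
  · exact le_abs_sum_range_succ_mul_pow hW1 hWB (fun j hj => hvW j hj.le)
      (mod_cast Int.one_le_abs hpade.leadingCoeff_ne_zero)
  · exact abs_sum_range_succ_mul_pow_le (by linarith) hvW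
  · rw [hrem]
    linarith
  · rw [hrem]
    linarith

theorem IsGoodApprox.const_mul {g W X Φ : ℝ} {Q P A B : ℤ}
    (h : IsGoodApprox g 1 W X Q (B * P)) (hA : Φ * B = A) :
    IsGoodApprox (Φ * g) |Φ| W X Q (A * P) := by
  have hsub : |Q * (Φ * g) - (A * P : ℤ)| = |Φ| * |Q * g - (B * P : ℤ)| := by
    rw [← abs_mul]
    push_cast
    rw [← hA]
    ring_nf
  refine ⟨h.le_abs_den, h.abs_den_le, ?_, ?_⟩
  · rw [hsub, mul_left_comm, div_eq_mul_one_div]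
    exact mul_le_mul_of_nonneg_left h.le_abs_sub (abs_nonneg Φ)
  · rw [hsub, mul_left_comm]
    exact mul_le_mul_of_nonneg_left (by simpa using h.abs_sub_le) (abs_nonneg Φ)

section Independence

variable {f δ W X β : ℝ} {Q Q₀ Q₁ P P₀ P₁ : ℤ}

theorem IsGoodApprox.mul_ne_mul (h₀ : IsGoodApprox f δ W X Q₀ P₀)
    (h₁ : IsGoodApprox f δ W (X * β) Q₁ P₁) (hδ : 0 < δ) (hX : 0 < X) (hW : 0 < W)
    (hWβ : 4 * W ≤ β) : Q₀ * P₁ ≠ Q₁ * P₀ := by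
  intro heq
  have hβ : 0 < β := by linarith
  have heq' : (Q₁ : ℝ) * (Q₀ * f - P₀) = Q₀ * (Q₁ * f - P₁) := by
    have : (Q₀ : ℝ) * P₁ = Q₁ * P₀ := mod_cast heq
    linear_combination this
  have hlower : X * β / 2 * (δ / 2) ≤ X * (|(Q₁ : ℝ)| * |Q₀ * f - P₀|) := by
    rw [mul_left_comm]
    exact mul_le_mul h₁.le_abs_den h₀.le_abs_sub (by positivity) (abs_nonneg _)
  have hupper : X * β * (|(Q₀ : ℝ)| * |Q₁ * f - P₁|) ≤ 2 * W * X * (δ * W) := by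
    rw [mul_left_comm]
    exact mul_le_mul h₀.abs_den_le h₁.abs_sub_le (by positivity) (by positivity)
  rw [← abs_mul, heq', abs_mul] at hlower
  have hβW : β ^ 2 ≤ 8 * W ^ 2 := by
    refine le_of_mul_le_mul_left ?_ (by positivity : 0 < X * δ)
    linarith [mul_le_mul_of_nonneg_left hlower hβ.le]
  nlinarith

theorem IsGoodApprox.one_le_mul_abs_sub (h : IsGoodApprox f δ W X Q P) (hX : 0 < X) {q p : ℤ}
    (hq : 0 < q) (hqX : 2 * q * δ * W ≤ X) (hne : Q * p ≠ q * P) :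
    1 ≤ 4 * W * X * |q * f - p| := by
  have hq' : (0 : ℝ) < q := mod_cast hq
  have hdet : (1 : ℝ) ≤ |q * (Q * f - P) - Q * (q * f - p)| := by
    have : (1 : ℤ) ≤ |Q * p - q * P| := Int.one_le_abs (sub_ne_zero.2 hne)
    calc (1 : ℝ) ≤ |(Q : ℝ) * p - q * P| := mod_cast this
      _ = _ := by ring_nf
  have hfirst : q * |Q * f - P| ≤ 1 / 2 := by
    refine le_of_mul_le_mul_left ?_ hX
    linarith [mul_le_mul_of_nonneg_left h.abs_sub_le hq'.le]
  have hsecond : |(Q : ℝ)| * |q * f - p| ≤ 2 * W * X * |q * f - p| := by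
    gcongr
    exact h.abs_den_le
  have htri := hdet.trans (abs_sub _ _)
  rw [abs_mul, abs_mul, abs_of_pos hq'] at htri
  linarith

theorem IsGoodApprox.one_le_mul_abs_sub_of_pair (h₀ : IsGoodApprox f δ W X Q₀ P₀)
    (h₁ : IsGoodApprox f δ W (X * β) Q₁ P₁) (hδ : 0 < δ) (hX : 0 < X) (hW : 1 ≤ W)
    (hWβ : 4 * W ≤ β) {q p : ℤ} (hq : 0 < q) (hqX : 2 * q * δ * W ≤ X) :
    1 ≤ 4 * W * (X * β) * |q * f - p| := by
  have hXβ : X ≤ X * β := le_mul_of_one_le_right hX.le (by linarith)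
  by_cases hne : Q₀ * p = q * P₀
  · refine h₁.one_le_mul_abs_sub (by linarith) hq (hqX.trans hXβ) fun hne₁ => ?_
    refine h₀.mul_ne_mul h₁ hδ hX (by linarith) hWβ (mul_left_cancel₀ hq.ne' ?_)
    linear_combination Q₁ * hne - Q₀ * hne₁
  · refine (h₀.one_le_mul_abs_sub hX hq hqX hne).trans ?_
    gcongr

end Independence

end GoodApprox

section MahlerApprox

variable {d : ℕ} {u : ℕ → ℤ} {γ : ℕ} {b : ℤ}

/-- This is the functional equation `f(z) = Φ(z) f(z ^ d ^ T)` at `z = b`. -/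
theorem exists_mahlerProd_eq_mul_tsum (hd : 1 < d) (hu : u 0 = 1)
    (hγ : ∀ n : ℕ, ‖digitProd d u n‖ ≤ ((n : ℝ) + 1) ^ γ) (hb : 2 ≤ |b|) (T : ℕ) :
    ∃ (Φ : ℝ) (A : ℤ), Φ * (b ^ d ^ T : ℤ) = A ∧ |Φ| ≤ geomMoment γ ∧
      mahlerProd d (fun i => (u i : ℝ)) (b : ℝ)⁻¹ =
        Φ * ∑' n, ((digitProd d u n : ℤ) : ℝ) * ((b ^ d ^ T : ℤ) : ℝ)⁻¹ ^ n := by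
  have hcast : ∀ n, digitProd d (fun i => (u i : ℝ)) n = (digitProd d u n : ℤ) := fun n =>
    (map_digitProd (Int.castRingHom ℝ) d u n).symm
  have hu' : (u 0 : ℝ) = 1 := mod_cast hu
  have hb0 : b ≠ 0 := by
    rintro rfl
    simp at hb
  have hx : ‖(b : ℝ)⁻¹‖ ≤ 1 / 2 := by
    rw [norm_inv, Real.norm_eq_abs, one_div]
    exact inv_anti₀ two_pos (mod_cast hb)
  have hx1 : ‖(b : ℝ)⁻¹‖ < 1 := hx.trans_lt (by norm_num)
  have hxT : ‖(b : ℝ)⁻¹ ^ d ^ T‖ < 1 := by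
    rw [norm_pow]
    exact pow_lt_one₀ (norm_nonneg _) hx1 (by positivity)
  obtain ⟨P, hP⟩ := exists_int_pow_mul_sum_inv_pow hb0 (digitProd d u) (d ^ T)
  refine ⟨∑ n ∈ range (d ^ T), ((digitProd d u n : ℤ) : ℝ) * (b : ℝ)⁻¹ ^ n, b * P, ?_, ?_, ?_⟩
  · push_cast
    rw [← hP, mul_comm]
  · refine (norm_sum_mul_pow_le (D := 1) (fun n => ?_) hx _).trans_eq (one_mul _)
    rw [Int.norm_cast_real, one_mul]
    exact hγ n
  · rw [mahlerProd_eq_prod_mul hd hu' hx1 T, prod_truncEval_eq_sum_digitProd hd hu',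
      mahlerProd_eq_tsum hd hu' hxT]
    simp only [hcast, Int.cast_pow, inv_pow]

theorem one_le_mul_abs_mul_mahlerProd_sub (hd : 1 < d) (hu : u 0 = 1)
    (hreg : HankelRegular (digitProd d u)) (hγ : ∀ n : ℕ, ‖digitProd d u n‖ ≤ ((n : ℝ) + 1) ^ γ)
    (hb : 2 ≤ |b|) (hf : mahlerProd d (fun i => (u i : ℝ)) (b : ℝ)⁻¹ ≠ 0) {T k : ℕ} (hk : 0 < k)
    (hWβ : 4 * padeBound γ (k + 1) ≤ |(b : ℝ)| ^ d ^ T) {q p : ℤ} (hq : 0 < q)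
    (hqβ : 2 * q * geomMoment γ * padeBound γ (k + 1) ≤ (|(b : ℝ)| ^ d ^ T) ^ k) :
    1 ≤ 4 * padeBound γ (k + 1) * (|(b : ℝ)| ^ d ^ T) ^ (k + 1) *
      |q * mahlerProd d (fun i => (u i : ℝ)) (b : ℝ)⁻¹ - p| := by
  obtain ⟨Φ, A, hA, hΦ, hfeq⟩ := exists_mahlerProd_eq_mul_tsum hd hu hγ hb T
  have hΦ0 : 0 < |Φ| := abs_pos.2 fun h => hf (by rw [hfeq, h, zero_mul])
  have hW : 1 ≤ padeBound γ (k + 1) := one_le_padeBound γ (k + 1)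
  have hβ : |((b ^ d ^ T : ℤ) : ℝ)| = |(b : ℝ)| ^ d ^ T := by rw [Int.cast_pow, abs_pow]
  have happrox : ∀ l, 0 < l → l ≤ k + 1 → ∃ Q P : ℤ, IsGoodApprox
      (mahlerProd d (fun i => (u i : ℝ)) (b : ℝ)⁻¹) |Φ| (padeBound γ (k + 1))
      ((|(b : ℝ)| ^ d ^ T) ^ l) Q P := fun l hl hlk => by
    obtain ⟨Q, P, h⟩ := hreg.exists_isGoodApprox hγ hl (padeBound_mono γ hlk) (hβ ▸ hWβ)
    rw [hβ] at h
    exact ⟨Q, A * P, hfeq ▸ h.const_mul hA⟩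
  obtain ⟨Q₀, P₀, h₀⟩ := happrox k hk k.le_succ
  obtain ⟨Q₁, P₁, h₁⟩ := happrox (k + 1) k.succ_pos le_rfl
  have hq' : (0 : ℝ) < q := mod_cast hq
  have hβ0 : 0 < |(b : ℝ)| ^ d ^ T := by linarith
  rw [pow_succ] at h₁ ⊢
  refine h₀.one_le_mul_abs_sub_of_pair h₁ hΦ0 (pow_pos hβ0 k) hW hWβ hq (le_trans ?_ hqβ)
  gcongr

end MahlerApprox

section Parameters

open Real

theorem tendsto_sqrt_mul_log_atTop : Tendsto (fun L => √(L * log L)) atTop atTop :=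
  tendsto_sqrt_atTop.comp (tendsto_id.atTop_mul_atTop₀ tendsto_log_atTop)

theorem isLittleO_sqrt_mul_log_id : (fun L => √(L * log L)) =o[atTop] (id : ℝ → ℝ) := by
  have h : (fun L => L * log L) =o[atTop] fun L : ℝ => L ^ 2 := by
    simpa only [id, pow_two] using
      (Asymptotics.isBigO_refl id atTop).mul_isLittleO isLittleO_log_id_atTop
  refine (h.sqrt (.of_forall sq_nonneg)).trans_eventuallyEq ?_
  filter_upwards [eventually_ge_atTop 0] with L hL using sqrt_sq hL

theorem exists_le_log_pow_pow_le {d : ℕ} (hd : 1 < d) {a y : ℝ} (ha : 1 < a) (hy : log a ≤ y) :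
    ∃ T : ℕ, y ≤ log (a ^ d ^ T) ∧ log (a ^ d ^ T) ≤ d * y := by
  have hloga : 0 < log a := log_pos ha
  obtain ⟨t, ht, ht'⟩ := exists_nat_pow_near ((one_le_div hloga).2 hy) (mod_cast hd : (1 : ℝ) < d)
  rw [le_div_iff₀ hloga] at ht
  rw [div_lt_iff₀ hloga] at ht'
  refine ⟨t + 1, ?_, ?_⟩ <;> rw [log_pow, Nat.cast_pow]
  · exact ht'.le
  · rw [pow_succ', mul_assoc]
    gcongr

theorem log_mul_padeBound_le {γ n : ℕ} {L s : ℝ} (hs : s ^ 2 = L * log L) (hs4 : 4 ≤ s)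
    (hsL : 4 * s ≤ L) (hγs : log (4 * geomMoment γ ^ 2) ≤ s) (hn : n * s ≤ L) :
    log (4 * geomMoment γ * padeBound γ (n + 3)) ≤ (2 * γ + 3) * s := by
  have hS := one_le_geomMoment γ
  have hsplit : 4 * geomMoment γ * padeBound γ (n + 3) =
      4 * geomMoment γ ^ 2 * (2 * (n : ℝ) + 8) ^ ((γ + 1) * (n + 4)) := by
    simp only [padeBound]
    push_cast
    ring
  have hlog : log (2 * n + 8) ≤ log L := by
    gcongr
    have : (n : ℝ) * 4 ≤ n * s := by gcongr
    linarith
  have hdeg : ((n : ℝ) + 4) * log L ≤ 2 * s := by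
    have hlogL : 0 ≤ log L := log_nonneg (by linarith)
    refine le_of_mul_le_mul_right ?_ (by linarith : 0 < s)
    linarith [mul_le_mul_of_nonneg_right (by linarith : (n + 4) * s ≤ 2 * L) hlogL]
  calc log (4 * geomMoment γ * padeBound γ (n + 3)) =
        log (4 * geomMoment γ ^ 2) + (γ + 1) * ((n + 4) * log (2 * n + 8)) := by
        rw [hsplit, log_mul (by positivity) (by positivity), log_pow]
        push_cast
        ring
    _ ≤ s + (γ + 1) * ((n + 4) * log L) := by gcongr
    _ ≤ s + (γ + 1) * (2 * s) := by gcongr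
    _ = (2 * γ + 3) * s := by ring

theorem exists_padeBound_parameters {d γ : ℕ} (hd : 1 < d) {a q s : ℝ} (ha : 1 < a) (hq : 1 ≤ q)
    (hs : s ^ 2 = log q * log (log q)) (hs4 : 4 ≤ s) (hsL : 4 * s ≤ log q) (has : log a ≤ s)
    (hγs : log (4 * geomMoment γ ^ 2) ≤ s) :
    ∃ T k : ℕ, 0 < k ∧ 4 * padeBound γ (k + 1) ≤ a ^ d ^ T ∧
      2 * q * geomMoment γ * padeBound γ (k + 1) ≤ (a ^ d ^ T) ^ k ∧
      4 * padeBound γ (k + 1) * (a ^ d ^ T) ^ (k + 1) ≤ q * exp (4 * d * (2 * γ + 3) * s) := by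
  have hρs : s ≤ (2 * γ + 3) * s :=
    le_mul_of_one_le_left (by linarith) (by linarith [γ.cast_nonneg (α := ℝ)])
  obtain ⟨T, hβ_ge, hβ_le⟩ := exists_le_log_pow_pow_le hd ha (has.trans hρs)
  set β := a ^ d ^ T
  have hβ0 : 0 < β := by positivity
  have hβ1 : 1 < β := (log_pos_iff hβ0.le).1 (by linarith)
  obtain ⟨n, hn, hn'⟩ := exists_nat_pow_near hq hβ1
  have hnL : n * s ≤ log q := by
    have := log_le_log (by positivity) hn
    rw [log_pow] at this
    exact (by gcongr; linarith : n * s ≤ n * log β).trans this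
  set S := geomMoment γ
  set W := padeBound γ (n + 3)
  have hS : 1 ≤ S := one_le_geomMoment γ
  have hW : 1 ≤ W := one_le_padeBound γ (n + 3)
  have hSWβ : 4 * S * W ≤ β := (log_le_log_iff (by positivity) hβ0).1
    ((log_mul_padeBound_le hs hs4 hsL hγs hnL).trans hβ_ge)
  have hWβ : 4 * W ≤ β := le_trans (by gcongr; linarith) hSWβ
  refine ⟨T, n + 2, by lia, hWβ, ?_, ?_⟩
  · calc 2 * q * S * W ≤ q * (4 * S * W) := by
          have : 0 ≤ q * S * W := by positivity
          linarith
      _ ≤ β ^ (n + 1) * β := by gcongr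
      _ = β ^ (n + 2) := (pow_succ ..).symm
  · have hβ4 : β ^ 4 ≤ exp (4 * d * (2 * γ + 3) * s) := by
      rw [← log_le_iff_le_exp (by positivity), log_pow]
      push_cast
      linarith
    calc 4 * W * β ^ (n + 2 + 1) ≤ β * β ^ (n + 2 + 1) := by gcongr
      _ = β ^ n * β ^ 4 := by ring
      _ ≤ q * exp (4 * d * (2 * γ + 3) * s) := by gcongr

theorem eventually_exists_padeBound_parameters {d : ℕ} (hd : 1 < d) (γ : ℕ) {a : ℝ} (ha : 1 < a) :
    ∀ᶠ q : ℝ in atTop, ∃ T k : ℕ, 0 < k ∧ 4 * padeBound γ (k + 1) ≤ a ^ d ^ T ∧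
      2 * q * geomMoment γ * padeBound γ (k + 1) ≤ (a ^ d ^ T) ^ k ∧
      4 * padeBound γ (k + 1) * (a ^ d ^ T) ^ (k + 1) ≤
        q * exp (4 * d * (2 * γ + 3) * √(log q * log (log q))) := by
  have hs := (tendsto_sqrt_mul_log_atTop.comp tendsto_log_atTop).eventually_ge_atTop
  have hsL := tendsto_log_atTop.eventually
    (isLittleO_sqrt_mul_log_id.bound (by norm_num : (0 : ℝ) < 1 / 4))
  filter_upwards [hs 4, hs (log a), hs (log (4 * geomMoment γ ^ 2)), hsL, eventually_ge_atTop 1]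
    with q hs4 has hγs hsL hq
  have hL : 0 ≤ log q := log_nonneg hq
  rw [norm_of_nonneg (sqrt_nonneg _), id, norm_of_nonneg hL] at hsL
  refine exists_padeBound_parameters hd ha hq (sq_sqrt ?_) hs4 (by linarith) has hγs
  exact (sqrt_pos.1 (by linarith [show (4 : ℝ) ≤ √(log q * log (log q)) from hs4])).le

end Parameters

section Irrationality

theorem finite_setOf_rat_den_lt_abs_sub_lt (x : ℝ) (N : ℕ) :
    {r : ℚ | r.den < N ∧ |x - r| < 1}.Finite := by
  obtain ⟨M, hM⟩ := exists_nat_ge ((|x| + 1) * N)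
  refine Set.Finite.of_finite_image (f := fun r : ℚ => (r.num, r.den))
    (((Set.finite_Icc (-(M : ℤ)) M).prod (Set.finite_Iio N)).subset ?_)
    fun r _ r' _ h => Rat.ext (congrArg Prod.fst h) (congrArg Prod.snd h)
  rintro _ ⟨r, ⟨hrN, hr⟩, rfl⟩
  have hr_abs : |(r : ℝ)| ≤ |x| + 1 := by
    have := abs_sub_abs_le_abs_sub (r : ℝ) x
    rw [abs_sub_comm] at this
    linarith
  have hnum : |(r.num : ℝ)| ≤ M := by
    have hr_mul : (r : ℝ) * r.den = r.num := mod_cast Rat.mul_den_eq_num r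
    rw [← hr_mul, abs_mul, Nat.abs_cast]
    refine le_trans ?_ hM
    gcongr
  exact ⟨abs_le.1 (mod_cast hnum), hrN⟩

theorem finite_setOf_rat_abs_sub_lt {x : ℝ} {φ : ℕ → ℝ} (hφ : ∀ q, φ q ≤ 1)
    (h : ∀ᶠ q : ℕ in atTop, ∀ p : ℤ, φ q ≤ q * |q * x - p|) :
    {r : ℚ | |x - r| < φ r.den / (r.den : ℝ) ^ 2}.Finite := by
  obtain ⟨N, hN⟩ := eventually_atTop.1 h
  refine (finite_setOf_rat_den_lt_abs_sub_lt x N).subset fun r hr => ?_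
  rw [Set.mem_ofPred_eq] at hr
  have hden : (1 : ℝ) ≤ r.den := mod_cast r.pos
  refine ⟨not_le.1 fun hNr => ?_, hr.trans_le (div_le_one_of_le₀ ?_ (by positivity))⟩
  · have hr_mul : (r : ℝ) * r.den = r.num := mod_cast Rat.mul_den_eq_num r
    have hle := hN _ hNr r.num
    rw [← hr_mul, mul_comm (r : ℝ), ← mul_sub, abs_mul, Nat.abs_cast, ← mul_assoc, ← pow_two] at hle
    exact hle.not_gt ((lt_div_iff₀' (by positivity)).1 hr)
  · exact (hφ _).trans (one_le_pow₀ hden)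

theorem exists_eventually_exp_le_mul_abs_mul_mahlerProd_sub {d : ℕ} {u : ℕ → ℤ} {b : ℤ}
    (hd : 1 < d) (hu : u 0 = 1) (hreg : HankelRegular (digitProd d u)) (hb : 2 ≤ |b|)
    (hf : mahlerProd d (fun i => (u i : ℝ)) (b : ℝ)⁻¹ ≠ 0) :
    ∃ K : ℝ, 0 < K ∧ ∀ᶠ q : ℕ in atTop, ∀ p : ℤ,
      Real.exp (-K * √(Real.log q * Real.log (Real.log q))) ≤
        q * |q * mahlerProd d (fun i => (u i : ℝ)) (b : ℝ)⁻¹ - p| := by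
  obtain ⟨γ, hγ⟩ := exists_norm_digitProd_le hd hu
  have hb' : 1 < |(b : ℝ)| := lt_of_lt_of_le one_lt_two (mod_cast hb)
  refine ⟨4 * d * (2 * γ + 3), by positivity, ?_⟩
  filter_upwards [tendsto_natCast_atTop_atTop.eventually
    (eventually_exists_padeBound_parameters hd γ hb'), eventually_gt_atTop 0] with q hparam hq p
  obtain ⟨T, k, hk, hWβ, hqβ, hexp⟩ := hparam
  have hone := one_le_mul_abs_mul_mahlerProd_sub hd hu hreg hγ hb hf hk hWβ (q := q) (p := p)
    (mod_cast hq) (by exact_mod_cast hqβ)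
  rw [neg_mul, Real.exp_neg]
  refine (inv_le_iff_one_le_mul₀ (Real.exp_pos _)).2 (hone.trans ?_)
  rw [Int.cast_natCast]
  exact (mul_le_mul_of_nonneg_right hexp (abs_nonneg _)).trans_eq (by ring)

end Irrationality

/-- (Main theorem.)  Let `d ≥ 2` and `f(z) = ∏_{t=0}^∞ P(z^{-d^t})` with
`P(z) = 1 + u_1 z + ⋯ + u_{d-1}z^{d-1} ∈ ℤ[z]` (so `P(0) = 1`, `deg P < d`), such that the
Laurent series `f` is badly approximable — all partial quotients of the continued fraction
of `f` over `ℚ((z^{-1}))` have degree `1`, which (as in the paper) is equivalent to all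
Hankel determinants of the coefficient sequence `c_n` of `g(z) = z^{-1}f(z)` being nonzero,
where `c_n = ∏ u_{digit}` over the base-`d` digits of `n-1`.  Then for any integer `b` with
`|b| ≥ 2`, either `f(b) = 0` or there is `K > 0` such that
`|f(b) - p/q| < q^{-2} exp(-K √(log q · log log q))` has only finitely many rational
solutions `p/q`. -/
theorem mahler_value_badly_approximable
    (d : ℕ) (hd : 2 ≤ d) (u : ℕ → ℤ) (hu0 : u 0 = 1) (hud : ∀ i, d ≤ i → u i = 0)
    (hH : ∀ n : ℕ,
      (Matrix.of fun i j : Fin n =>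
        ((((Nat.digits d (i.1 + j.1)).map u).prod : ℤ) : ℚ)).det ≠ 0)
    (b : ℤ) (hb : 2 ≤ |b|)
    (fb : ℝ)
    (hfb : fb = ∏' t : ℕ, ∑ i ∈ Finset.range d, (u i : ℝ) * (((b : ℝ))⁻¹ ^ (d ^ t)) ^ i) :
    fb = 0 ∨
    ∃ K : ℝ, 0 < K ∧
      {r : ℚ | |fb - (r : ℝ)| <
        Real.exp (-K * Real.sqrt (Real.log r.den * Real.log (Real.log r.den))) /
          (r.den : ℝ) ^ 2}.Finite := by
  have hreg : HankelRegular (digitProd d u) := fun n hn => hH n <| by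
    have h := congrArg (Int.castRingHom ℚ) hn
    rwa [RingHom.map_det, map_zero] at h
  refine or_iff_not_imp_left.2 fun hfb0 => ?_
  obtain ⟨K, hK, hev⟩ := exists_eventually_exp_le_mul_abs_mul_mahlerProd_sub hd hu0 hreg hb
    fun h => hfb0 (hfb.trans h)
  refine ⟨K, hK, ?_⟩
  subst hfb
  refine finite_setOf_rat_abs_sub_lt (fun q => Real.exp_le_one_iff.2 ?_) hev
  exact mul_nonpos_of_nonpos_of_nonneg (neg_nonpos.2 hK.le) (Real.sqrt_nonneg _)
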